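/- arXiv:2004.08800 — 4 statements merged into one kernel-verified Lean document; each statement's English description precedes it below -/
import Mathlib

section
/- Let p ≥ 5 be a prime and θ ∈ [0,π], and set e_n = 1 + p^n − 2·p^{n/2}·cos(nθ). Then the map n ↦ e_n is injective on positive integers: for all n₁, n₂ ≥ 1 with n₁ ≠ n₂ one has e_{n₁} ≠ e_{n₂}. -/
/-!
The Frobenius eigenvalue `α = √q * exp (θ * I)` satisfies `e n = ‖1 - α ^ n‖ ^ 2`, so the triangle
inequality puts `√(e n)` between `‖α‖ ^ n - 1` and `‖α‖ ^ n + 1`. For `‖α‖ > 2` consecutive powers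
of `‖α‖` differ by more than `2`, so these intervals are disjoint and increase with `n ≥ 1`.
The bound is sharp: `‖1 - α‖ = ‖1 - α ^ 2‖` for `α = -2`.
-/

lemma pow_add_two_lt_pow_of_lt {R : Type*} [Semiring R] [PartialOrder R] [IsStrictOrderedRing R]
    {r : R} (hr : 2 < r) {m n : ℕ} (hm : m ≠ 0) (hmn : m < n) : r ^ m + 2 < r ^ n := by
  have hr1 : 1 ≤ r := one_le_two.trans hr.le
  calc r ^ m + 2 < r ^ m + r ^ m := by gcongr; exact hr.trans_le (le_self_pow₀ hr1 hm)
    _ = r ^ m * 2 := (mul_two _).symm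
    _ ≤ r ^ m * r := by gcongr
    _ = r ^ (m + 1) := (pow_succ r m).symm
    _ ≤ r ^ n := pow_le_pow_right₀ hr1 hmn

lemma strictMonoOn_norm_one_sub_pow {K : Type*} [NormedRing K] [NormMulClass K] {α : K}
    (hα : 2 < ‖α‖) : StrictMonoOn (fun n : ℕ ↦ ‖1 - α ^ n‖) (Set.Ici 1) := by
  have : Nontrivial K := ⟨α, 0, norm_pos_iff.mp (two_pos.trans hα)⟩
  have : NormOneClass K := NormMulClass.toNormOneClass
  intro m hm n _ hmn
  have upper : ‖1 - α ^ m‖ ≤ 1 + ‖α‖ ^ m := by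
    simpa only [norm_one, norm_pow] using norm_sub_le 1 (α ^ m)
  have lower : ‖α‖ ^ n - 1 ≤ ‖1 - α ^ n‖ := by
    simpa only [norm_one, norm_pow, norm_sub_rev] using norm_sub_norm_le (α ^ n) 1
  have gap : ‖α‖ ^ m + 2 < ‖α‖ ^ n :=
    pow_add_two_lt_pow_of_lt hα (Nat.one_le_iff_ne_zero.mp hm) hmn
  change ‖1 - α ^ m‖ < ‖1 - α ^ n‖
  linarith

open Complex in
lemma norm_one_sub_mul_exp_sq (r t : ℝ) :
    ‖1 - r * exp (t * I)‖ ^ 2 = 1 + r ^ 2 - 2 * r * Real.cos t := by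
  rw [Complex.sq_norm, normSq_sub, ← Complex.sq_norm (r * exp (t * I)), norm_mul,
    norm_exp_ofReal_mul_I, norm_real, mul_one, Real.norm_eq_abs, sq_abs]
  simp [exp_ofReal_mul_I_re, mul_assoc]

open Complex in
lemma norm_one_sub_sqrt_mul_exp_pow_sq {q : ℝ} (hq : 0 ≤ q) (θ : ℝ) (n : ℕ) :
    ‖1 - (√q * exp (θ * I)) ^ n‖ ^ 2 =
      1 + q ^ n - 2 * q ^ ((n : ℝ) / 2) * Real.cos (n * θ) := by
  have hpow : (√q * exp (θ * I)) ^ n = (√q ^ n : ℝ) * exp ((n * θ : ℝ) * I) := by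
    rw [mul_pow, ← exp_nat_mul]
    push_cast
    rw [mul_assoc]
  rw [hpow, norm_one_sub_mul_exp_sq, pow_right_comm, Real.sq_sqrt hq,
    Real.rpow_div_two_eq_sqrt _ hq, Real.rpow_natCast]

theorem stmt_2_general {q : ℝ} (hq : 4 < q) (θ : ℝ) :
    StrictMonoOn (fun n : ℕ ↦ 1 + q ^ n - 2 * q ^ ((n : ℝ) / 2) * Real.cos (n * θ))
      (Set.Ici 1) := by
  have hα : 2 < ‖(√q * Complex.exp (θ * Complex.I) : ℂ)‖ := by
    rw [norm_mul, Complex.norm_exp_ofReal_mul_I, Complex.norm_real, mul_one,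
      Real.norm_of_nonneg q.sqrt_nonneg]
    exact Real.lt_sqrt_of_sq_lt (by linarith)
  intro m hm n hn hmn
  simp only [← norm_one_sub_sqrt_mul_exp_pow_sq (by linarith : 0 ≤ q)]
  exact pow_lt_pow_left₀ (strictMonoOn_norm_one_sub_pow hα hm hn hmn) (norm_nonneg _) two_ne_zero

/-- The map `n ↦ e n = 1 + p^n - 2 p^{n/2} cos (n θ)` is injective on positive integers. -/
theorem stmt_2 (p : ℕ) (hp : p.Prime) (hp5 : 5 ≤ p) (θ : ℝ) (hθ : θ ∈ Set.Icc 0 Real.pi)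
    (e : ℕ → ℝ)
    (he : ∀ n : ℕ, e n = 1 + (p : ℝ) ^ n - 2 * (p : ℝ) ^ ((n : ℝ) / 2) * Real.cos (n * θ)) :
    ∀ n₁ n₂ : ℕ, 1 ≤ n₁ → 1 ≤ n₂ → n₁ ≠ n₂ → e n₁ ≠ e n₂ := by
  obtain rfl := funext he
  exact fun _ _ h₁ h₂ ↦ mt ((stmt_2_general (by exact_mod_cast hp5) θ).injOn h₁ h₂)
end

section
/- Let p be a prime and t a real number, and for complex s define B_p(s) = ((1+p−t)·p^{−s}·(1−p^{1−2s})) / ((1−t·p^{−s}+p^{1−2s})·(1−p^{−s})·(1−p^{1−s})). Then for every complex s at which all the factors (1−t·p^{−s}+p^{1−2s}), (1−p^{−s}), (1−p^{1−s}) are nonzero both at s and at 1−s, one has the local functional equation B_p(1−s) = −B_p(s). -/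
/-!
Under `s ↦ 1 - s` each of the quadratic factors `1 - t q⁻ˢ + q¹⁻²ˢ` and `(1 - q⁻ˢ)(1 - q¹⁻ˢ)` of the
denominator is multiplied by `q²ˢ⁻¹`; so is the factor `q⁻ˢ` of the numerator, while `1 - q¹⁻²ˢ` is
multiplied by `-q²ˢ⁻¹`. Hence the quotient changes sign.
-/

/-- The local Euler factor `1 - t q⁻ˢ + q¹⁻²ˢ` (the inverse of the local `L`-factor) with trace of
Frobenius `t`. -/
noncomputable def eulerFactor (q t s : ℂ) : ℂ :=
  1 - t * q ^ (-s) + q ^ (1 - 2 * s)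

/-- The numerator of the generating function of the point counts, evaluated at `z = q⁻ˢ`;
`e` stands for the number `e₁ = 1 + q - t` of points over the base field. -/
noncomputable def pointCountNumerator (q e s : ℂ) : ℂ :=
  e * q ^ (-s) * (1 - q ^ (1 - 2 * s))

/-- The denominator of the generating function of the point counts, evaluated at `z = q⁻ˢ`;
`t` is the trace of Frobenius. -/
noncomputable def pointCountDenominator (q t s : ℂ) : ℂ :=
  eulerFactor q t s * (1 - q ^ (-s)) * (1 - q ^ (1 - s))

section FunctionalEquation

variable {q : ℂ}

theorem cpow_neg_one_sub (hq : q ≠ 0) (s : ℂ) : q ^ (-(1 - s)) = q ^ (2 * s - 1) * q ^ (-s) := by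
  rw [← Complex.cpow_add _ _ hq]
  ring_nf

theorem cpow_two_mul_sub_one_mul_cpow_one_sub_two_mul (hq : q ≠ 0) (s : ℂ) :
    q ^ (2 * s - 1) * q ^ (1 - 2 * s) = 1 := by
  rw [← Complex.cpow_add _ _ hq, sub_add_sub_cancel, sub_self, Complex.cpow_zero]

theorem eulerFactor_one_sub (hq : q ≠ 0) (t s : ℂ) :
    eulerFactor q t (1 - s) = q ^ (2 * s - 1) * eulerFactor q t s := by
  have h_exponent : 1 - 2 * (1 - s) = 2 * s - 1 := by ring
  rw [eulerFactor, eulerFactor, h_exponent, cpow_neg_one_sub hq]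
  linear_combination -cpow_two_mul_sub_one_mul_cpow_one_sub_two_mul hq s

theorem eulerFactor_one_add (hq : q ≠ 0) (s : ℂ) :
    eulerFactor q (1 + q) s = (1 - q ^ (-s)) * (1 - q ^ (1 - s)) := by
  have h_linear : q ^ (1 - s) = q * q ^ (-s) := by
    rw [sub_eq_add_neg, Complex.cpow_add _ _ hq, Complex.cpow_one]
  have h_quadratic : q ^ (1 - 2 * s) = q ^ (-s) * q ^ (1 - s) := by
    rw [← Complex.cpow_add _ _ hq]
    ring_nf
  rw [eulerFactor, h_quadratic, h_linear]
  ring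

theorem pointCountNumerator_one_sub (hq : q ≠ 0) (e s : ℂ) :
    pointCountNumerator q e (1 - s) = (q ^ (2 * s - 1)) ^ 2 * -pointCountNumerator q e s := by
  have h_exponent : 1 - 2 * (1 - s) = 2 * s - 1 := by ring
  rw [pointCountNumerator, pointCountNumerator, h_exponent, cpow_neg_one_sub hq]
  linear_combination -e * q ^ (2 * s - 1) * q ^ (-s) *
    cpow_two_mul_sub_one_mul_cpow_one_sub_two_mul hq s

theorem pointCountDenominator_eq_eulerFactor_mul (hq : q ≠ 0) (t s : ℂ) :
    pointCountDenominator q t s = eulerFactor q t s * eulerFactor q (1 + q) s := by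
  rw [pointCountDenominator, eulerFactor_one_add hq, mul_assoc]

theorem pointCountDenominator_one_sub (hq : q ≠ 0) (t s : ℂ) :
    pointCountDenominator q t (1 - s) = (q ^ (2 * s - 1)) ^ 2 * pointCountDenominator q t s := by
  simp only [pointCountDenominator_eq_eulerFactor_mul hq, eulerFactor_one_sub hq]
  ring

theorem stmt_12_general (hq : q ≠ 0) (e t : ℂ) (B : ℂ → ℂ)
    (hB : ∀ s, pointCountDenominator q t s ≠ 0 →
      B s = pointCountNumerator q e s / pointCountDenominator q t s)
    {s : ℂ} (hs : pointCountDenominator q t s ≠ 0) :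
    B (1 - s) = -B s := by
  have h_scale : (q ^ (2 * s - 1)) ^ 2 ≠ 0 :=
    pow_ne_zero 2 (Complex.cpow_ne_zero_iff.mpr (.inl hq))
  have hs' : pointCountDenominator q t (1 - s) ≠ 0 := by
    rw [pointCountDenominator_one_sub hq]
    exact mul_ne_zero h_scale hs
  rw [hB _ hs', hB _ hs, pointCountNumerator_one_sub hq, pointCountDenominator_one_sub hq,
    mul_div_mul_left _ _ h_scale, neg_div]

end FunctionalEquation

/-- Local functional equation `B_p(1-s) = -B_p(s)` for the local generating function. -/
theorem stmt_12 (p : ℕ) (hp : p.Prime) (t : ℝ) (B : ℂ → ℂ)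
    (hB : ∀ s : ℂ, B s =
      (1 + (p : ℂ) - (t : ℂ)) * (p : ℂ) ^ (-s) * (1 - (p : ℂ) ^ (1 - 2 * s)) /
        ((1 - (t : ℂ) * (p : ℂ) ^ (-s) + (p : ℂ) ^ (1 - 2 * s)) *
          (1 - (p : ℂ) ^ (-s)) * (1 - (p : ℂ) ^ (1 - s)))) :
    ∀ s : ℂ,
      (1 - (t : ℂ) * (p : ℂ) ^ (-s) + (p : ℂ) ^ (1 - 2 * s)) ≠ 0 →
      (1 - (p : ℂ) ^ (-s)) ≠ 0 →
      (1 - (p : ℂ) ^ (1 - s)) ≠ 0 →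
      (1 - (t : ℂ) * (p : ℂ) ^ (-(1 - s)) + (p : ℂ) ^ (1 - 2 * (1 - s))) ≠ 0 →
      (1 - (p : ℂ) ^ (-(1 - s))) ≠ 0 →
      (1 - (p : ℂ) ^ (1 - (1 - s))) ≠ 0 →
      B (1 - s) = -B s := by
  intro s h_euler h_one h_q _ _ _
  exact stmt_12_general (Nat.cast_ne_zero.mpr hp.ne_zero) _ _ B (fun w _ ↦ hB w)
    (mul_ne_zero (mul_ne_zero h_euler h_one) h_q)
end

section
/- Let S be a finite set of primes and (a_p) integers indexed by the primes p ∉ S with a_p² ≤ 4p. Then for every complex s with Re(s) > 2, all of the following infinite products over primes converge, and ∏_{p∉S} (1−p^{1−2s}) / ((1−a_p·p^{−s}+p^{1−2s})·(1−p^{1−s})) = (∏_{p∉S} (1−a_p·p^{−s}+p^{1−2s})^{−1}) · (∏_{p∈S} (1−p^{1−s})) · (∏_{p∈S} (1−p^{1−2s})^{−1}) · ζ(s−1) · ζ(2s−1)^{−1}, where ζ is the Riemann zeta function. -/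
/-!
At each prime `p ∉ S` the factor is `(1 - a_p p⁻ˢ + p^{1-2s})⁻¹` times `(1 - p^{1-s})⁻¹` times
`1 - p^{1-2s}`, and the last two are Euler factors of `ζ(s-1)` and `ζ(2s-1)⁻¹`. Hence it suffices
that the three products converge separately. For the first one, `|a_p| ≤ 2√p ≤ p + 1` makes
`a_p p⁻ˢ - p^{1-2s}` of size `O(p^{1 - Re s})`, which is summable for `Re s > 2`, with a constant
small enough to keep every factor away from zero.
-/

theorem rpow_le_rpow_of_le_of_le_of_nonpos {x y b c : ℝ} (hx : 1 ≤ x) (hxy : x ≤ y)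
    (hbc : b ≤ c) (hc : c ≤ 0) : y ^ b ≤ x ^ c :=
  (Real.rpow_le_rpow_of_exponent_le (hx.trans hxy) hbc).trans
    (Real.rpow_le_rpow_of_nonpos (by linarith) hxy hc)

theorem norm_intCast_le_add_one_of_sq_le_four_mul {b : ℤ} {n : ℕ} (hb : b ^ 2 ≤ 4 * n) :
    ‖(b : ℂ)‖ ≤ n + 1 := by
  have hb' : (b : ℝ) ^ 2 ≤ 4 * n := by exact_mod_cast hb
  rw [Complex.norm_intCast]
  exact abs_le_of_sq_le_sq (by linarith [sq_nonneg ((n : ℝ) - 1)]) (by positivity)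

theorem hasProd_diff_finset {ι K : Type*} [CommGroupWithZero K] [TopologicalSpace K]
    [ContinuousMul K] {f : ι → K} {x : K} {T : Set ι} {S : Finset ι} (hST : (S : Set ι) ⊆ T)
    (hf : ∀ i ∈ S, f i ≠ 0) (h : HasProd (fun i : T => f i) x) :
    HasProd (fun i : (T \ S : Set ι) => f i) (x * ∏ i ∈ S, (f i)⁻¹) := by
  have hT : HasProd (T.mulIndicator f) x := hasProd_subtype_iff_mulIndicator.1 h
  have hS : HasProd ((S : Set ι).mulIndicator fun i => (f i)⁻¹) (∏ i ∈ S, (f i)⁻¹) :=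
    hasProd_subtype_iff_mulIndicator.1 (S.hasProd fun i => (f i)⁻¹)
  refine hasProd_subtype_iff_mulIndicator.2 ((hT.mul hS).congr_fun ?_)
  intro i
  by_cases hi : i ∈ S
  · simp [Set.mulIndicator, hi, hST hi, hf i hi]
  · by_cases hiT : i ∈ T <;> simp [hi, hiT]

theorem multipliable_inv_one_add_of_summable {ι K : Type*} [NormedField K] [CompleteSpace K]
    {u : ι → K} (hu : Summable fun i => ‖u i‖) (hne : ∀ i, 1 + u i ≠ 0) :
    Multipliable fun i => (1 + u i)⁻¹ :=
  (multipliable_one_add_of_summable hu).inv₀ (tprod_one_add_ne_zero_of_summable hne hu)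

section RiemannZeta

variable {S : Finset ℕ} {w : ℂ}

theorem riemannZeta_eulerProduct_hasProd_notMem (hS : ∀ p ∈ S, p.Prime) (hw : 1 < w.re) :
    HasProd (fun q : {q : ℕ // q.Prime ∧ q ∉ S} => (1 - (q.1 : ℂ) ^ (-w))⁻¹)
      (riemannZeta w * ∏ p ∈ S, (1 - (p : ℂ) ^ (-w))) := by
  simpa only [inv_inv] using! hasProd_diff_finset hS
    (fun p hp => inv_ne_zero (Complex.one_sub_prime_cpow_ne_zero (hS p hp) hw))
    (riemannZeta_eulerProduct_hasProd hw)

theorem riemannZeta_inv_eulerProduct_hasProd_notMem (hS : ∀ p ∈ S, p.Prime) (hw : 1 < w.re) :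
    HasProd (fun q : {q : ℕ // q.Prime ∧ q ∉ S} => 1 - (q.1 : ℂ) ^ (-w))
      ((riemannZeta w)⁻¹ * ∏ p ∈ S, (1 - (p : ℂ) ^ (-w))⁻¹) := by
  have hprimes : HasProd (fun p : Nat.Primes => 1 - (p : ℂ) ^ (-w)) (riemannZeta w)⁻¹ := by
    simpa only [inv_inv] using
      (riemannZeta_eulerProduct_hasProd hw).inv₀ (riemannZeta_ne_zero_of_one_lt_re hw)
  exact hasProd_diff_finset hS
    (fun p hp => Complex.one_sub_prime_cpow_ne_zero (hS p hp) hw) hprimes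

end RiemannZeta

section LPolynomial

/-- The polynomial `1 - a T + n T²` evaluated at `T = n⁻ˢ`. For `n = p` prime and `a = a_p` its
inverse is the Euler factor at `p` of the `L`-function of an elliptic curve; `n` and `a` are kept
independent of any curve. -/
noncomputable def lPolynomial (a : ℂ) (n : ℕ) (s : ℂ) : ℂ :=
  1 - a * (n : ℂ) ^ (-s) + (n : ℂ) ^ (1 - 2 * s)

variable {a : ℂ} {n : ℕ} {s : ℂ}

theorem norm_lPolynomial_sub_one_le (hn : 2 ≤ n) (ha : ‖a‖ ≤ n + 1) (hs : 2 ≤ s.re) :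
    ‖lPolynomial a n s - 1‖ ≤ 7 / 4 * (n : ℝ) ^ (1 - s.re) := by
  have hn' : (2 : ℝ) ≤ n := by exact_mod_cast hn
  have hpos : 0 < n := by lia
  set x : ℝ := (n : ℝ) ^ (-s.re)
  have : 0 ≤ x := by positivity
  have hx' : x ≤ 1 / 4 :=
    (rpow_le_rpow_of_le_of_le_of_nonpos one_le_two hn' (neg_le_neg hs) (by norm_num)).trans_eq
      (by norm_num [Real.rpow_neg])
  have hlinear : ‖a * (n : ℂ) ^ (-s)‖ ≤ (n + 1) * x := by
    rw [norm_mul, Complex.norm_natCast_cpow_of_pos hpos, Complex.neg_re]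
    gcongr
  have hshift : (n : ℝ) ^ (1 - s.re) = n * x := by
    rw [sub_eq_add_neg, Real.rpow_add (by positivity), Real.rpow_one]
  have hquadratic : ‖(n : ℂ) ^ (1 - 2 * s)‖ = n * x * x := by
    rw [Complex.norm_natCast_cpow_of_pos hpos, ← hshift, ← Real.rpow_add (by positivity)]
    congr 1
    simp only [Complex.sub_re, Complex.one_re, Complex.mul_re, Complex.re_ofNat, Complex.im_ofNat]
    ring
  calc ‖lPolynomial a n s - 1‖
      = ‖(n : ℂ) ^ (1 - 2 * s) - a * (n : ℂ) ^ (-s)‖ := by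
        rw [lPolynomial]
        congr 1
        ring
    _ ≤ ‖(n : ℂ) ^ (1 - 2 * s)‖ + ‖a * (n : ℂ) ^ (-s)‖ := norm_sub_le _ _
    _ ≤ n * x * x + (n + 1) * x := add_le_add hquadratic.le hlinear
    _ ≤ n * x * (1 / 4) + (n + n / 2) * x := by
        gcongr
        linarith
    _ = 7 / 4 * (n : ℝ) ^ (1 - s.re) := by
        rw [hshift]
        ring

theorem lPolynomial_ne_zero (hn : 2 ≤ n) (ha : ‖a‖ ≤ n + 1) (hs : 2 ≤ s.re) :
    lPolynomial a n s ≠ 0 := by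
  intro hzero
  have hle : 1 ≤ 7 / 4 * (n : ℝ) ^ (1 - s.re) := by
    simpa only [hzero, zero_sub, norm_neg, norm_one] using norm_lPolynomial_sub_one_le hn ha hs
  have hhalf : (n : ℝ) ^ (1 - s.re) ≤ (2 : ℝ) ^ (-1 : ℝ) :=
    rpow_le_rpow_of_le_of_le_of_nonpos one_le_two (by exact_mod_cast hn) (by linarith)
      (by norm_num)
  rw [Real.rpow_neg_one] at hhalf
  linarith

theorem multipliable_inv_lPolynomial {a : ℕ → ℂ} {T : Set ℕ} (hT : ∀ n ∈ T, 2 ≤ n)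
    (ha : ∀ n ∈ T, ‖a n‖ ≤ n + 1) (hs : 2 < s.re) :
    Multipliable fun n : T => (lPolynomial (a n) n s)⁻¹ := by
  have hrpow : Summable fun n : T => (n : ℝ) ^ (1 - s.re) :=
    (Real.summable_nat_rpow.2 (by linarith)).subtype T
  have hsum : Summable fun n : T => ‖lPolynomial (a n) n s - 1‖ :=
    (hrpow.mul_left (7 / 4)).of_nonneg_of_le (fun _ => norm_nonneg _)
      fun n => norm_lPolynomial_sub_one_le (hT n n.2) (ha n n.2) hs.le
  simpa only [add_sub_cancel] using multipliable_inv_one_add_of_summable hsum fun n => by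
    simpa only [add_sub_cancel] using lPolynomial_ne_zero (hT n n.2) (ha n n.2) hs.le

end LPolynomial

theorem stmt_13_general {S : Finset ℕ} (hS : ∀ p ∈ S, p.Prime) {a : ℕ → ℂ}
    (ha : ∀ p : ℕ, p.Prime → p ∉ S → ‖a p‖ ≤ p + 1) {s : ℂ} (hs : 2 < s.re) :
    Multipliable (fun q : {q : ℕ // q.Prime ∧ q ∉ S} =>
      (1 - (q.1 : ℂ) ^ (1 - 2 * s)) /
        (lPolynomial (a q.1) q.1 s * (1 - (q.1 : ℂ) ^ (1 - s)))) ∧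
    Multipliable (fun q : {q : ℕ // q.Prime ∧ q ∉ S} => (lPolynomial (a q.1) q.1 s)⁻¹) ∧
    (∏' q : {q : ℕ // q.Prime ∧ q ∉ S},
        (1 - (q.1 : ℂ) ^ (1 - 2 * s)) /
          (lPolynomial (a q.1) q.1 s * (1 - (q.1 : ℂ) ^ (1 - s)))) =
      (∏' q : {q : ℕ // q.Prime ∧ q ∉ S}, (lPolynomial (a q.1) q.1 s)⁻¹) *
        (∏ p ∈ S, (1 - (p : ℂ) ^ (1 - s))) *
        (∏ p ∈ S, (1 - (p : ℂ) ^ (1 - 2 * s))⁻¹) *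
        riemannZeta (s - 1) * (riemannZeta (2 * s - 1))⁻¹ := by
  have hL : Multipliable fun q : {q : ℕ // q.Prime ∧ q ∉ S} => (lPolynomial (a q.1) q.1 s)⁻¹ :=
    multipliable_inv_lPolynomial (T := {q | q.Prime ∧ q ∉ S}) (fun q hq => hq.1.two_le)
      (fun q hq => ha q hq.1 hq.2) hs
  have hζ := riemannZeta_eulerProduct_hasProd_notMem hS (w := s - 1) (by simp; linarith)
  have hζ_inv := riemannZeta_inv_eulerProduct_hasProd_notMem hS (w := 2 * s - 1)
    (by simp; linarith)
  rw [neg_sub] at hζ hζ_inv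
  have hB := (hL.hasProd.mul hζ).mul hζ_inv
  have hfactor (q : {q : ℕ // q.Prime ∧ q ∉ S}) :
      (1 - (q.1 : ℂ) ^ (1 - 2 * s)) / (lPolynomial (a q.1) q.1 s * (1 - (q.1 : ℂ) ^ (1 - s))) =
        (lPolynomial (a q.1) q.1 s)⁻¹ * (1 - (q.1 : ℂ) ^ (1 - s))⁻¹ *
          (1 - (q.1 : ℂ) ^ (1 - 2 * s)) := by
    rw [div_eq_mul_inv, mul_inv, mul_comm]
  simp only [hfactor]
  refine ⟨hB.multipliable, hL, ?_⟩
  rw [hB.tprod_eq]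
  ring

/-- Euler-product factorization of the global generating function for `Re s > 2`. -/
theorem stmt_13 (S : Finset ℕ) (hS : ∀ p ∈ S, p.Prime) (a : ℕ → ℤ)
    (ha : ∀ p : ℕ, p.Prime → p ∉ S → (a p) ^ 2 ≤ 4 * p) :
    ∀ s : ℂ, 2 < s.re →
      Multipliable (fun q : {q : ℕ // q.Prime ∧ q ∉ S} =>
        (1 - (q.1 : ℂ) ^ (1 - 2 * s)) /
          ((1 - (a q.1 : ℂ) * (q.1 : ℂ) ^ (-s) + (q.1 : ℂ) ^ (1 - 2 * s)) *
            (1 - (q.1 : ℂ) ^ (1 - s)))) ∧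
      Multipliable (fun q : {q : ℕ // q.Prime ∧ q ∉ S} =>
        (1 - (a q.1 : ℂ) * (q.1 : ℂ) ^ (-s) + (q.1 : ℂ) ^ (1 - 2 * s))⁻¹) ∧
      (∏' q : {q : ℕ // q.Prime ∧ q ∉ S},
          (1 - (q.1 : ℂ) ^ (1 - 2 * s)) /
            ((1 - (a q.1 : ℂ) * (q.1 : ℂ) ^ (-s) + (q.1 : ℂ) ^ (1 - 2 * s)) *
              (1 - (q.1 : ℂ) ^ (1 - s)))) =
        (∏' q : {q : ℕ // q.Prime ∧ q ∉ S},
            (1 - (a q.1 : ℂ) * (q.1 : ℂ) ^ (-s) + (q.1 : ℂ) ^ (1 - 2 * s))⁻¹) *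
          (∏ p ∈ S, (1 - (p : ℂ) ^ (1 - s))) *
          (∏ p ∈ S, (1 - (p : ℂ) ^ (1 - 2 * s))⁻¹) *
          riemannZeta (s - 1) * (riemannZeta (2 * s - 1))⁻¹ :=
  fun _ => stmt_13_general hS fun p hp hpS =>
    norm_intCast_le_add_one_of_sq_le_four_mul (ha p hp hpS)
end

section
/- Let S be a finite set of primes and (a_p) integers indexed by the primes p ∉ S with a_p² ≤ 4p, and let B(s) = ∏_{p∉S} (1−p^{1−2s}) / ((1−a_p·p^{−s}+p^{1−2s})·(1−p^{1−s})). Then B has a simple pole at s = 2: as s → 2 with Re(s) > 2, (s−2)·B(s) converges to (∏_{p∈S}(1−p^{−1})) · (∏_{p∈S}(1−p^{−3})^{−1}) · (∏_{p∉S}(1−a_p·p^{−2}+p^{−3})^{−1}) / ζ(3), where the product over p ∉ S converges and ζ is the Riemann zeta function. -/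
open Filter

/-!
`B(s) = L(s) ζ_S(s - 1) / ζ_S(2s - 1)`, where `L(s) = ∏ (1 - a_p p^{-s} + p^{1-2s})⁻¹` and `ζ_S` is
`ζ` without its Euler factors at `S`, i.e. the `L`-function of the trivial Dirichlet character
modulo `∏ p ∈ S, p`. At `s = 2` the denominator tends to `ζ_S(3) ≠ 0`, `ζ_S(s - 1)` has a simple
pole, and `L` is continuous up to the line `Re s = 2` by dominated convergence. Convergence is
analysed for the product of the polynomials `1 - a_p p^{-s} + p^{1-2s}` rather than of their
inverses, so that nonvanishing of the factors is only needed at the point `s = 2` itself.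
-/

open DirichletCharacter Topology

/-- The primes outside `S`, over which all Euler products run. -/
abbrev PrimesOutside (S : Finset ℕ) : Type := {q : ℕ // q.Prime ∧ q ∉ S}

section TrivialCharacter

variable (N : ℕ) [NeZero N]

lemma hasProd_LFunctionTrivChar {s : ℂ} (hs : 1 < s.re) :
    HasProd (fun q : PrimesOutside N.primeFactors ↦ (1 - (q : ℂ) ^ (-s))⁻¹)
      (LFunctionTrivChar N s) := by
  let f : Nat.Primes → ℂ := fun p ↦ (1 - (1 : DirichletCharacter ℂ N) p * (p : ℂ) ^ (-s))⁻¹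
  let ι : PrimesOutside N.primeFactors → Nat.Primes := fun q ↦ ⟨q, q.2.1⟩
  have hι : Function.Injective ι := fun q r h ↦ Subtype.ext (Subtype.mk.inj h)
  have hf_eq_one : ∀ p ∉ Set.range ι, f p = 1 := fun p hp ↦ by
    have hpN : p.1 ∣ N := by
      by_contra hpN
      exact hp ⟨⟨p, p.2, fun h ↦ hpN (Nat.dvd_of_mem_primeFactors h)⟩, rfl⟩
    have hχ : (1 : DirichletCharacter ℂ N) p = 0 :=
      MulChar.map_nonunit _ fun h ↦ (ZMod.isUnit_prime_iff_not_dvd p.2).mp h hpN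
    simp only [f, hχ, zero_mul, sub_zero, inv_one]
  have hprod : HasProd f (LFunctionTrivChar N s) := by
    rw [LFunctionTrivChar, LFunction_eq_LSeries _ hs]
    exact LSeries_eulerProduct_hasProd 1 hs
  refine ((hι.hasProd_iff hf_eq_one).mpr hprod).congr_fun fun q ↦ ?_
  have hqN : ¬ q.1 ∣ N := fun h ↦ q.2.2 (q.2.1.mem_primeFactors h (NeZero.ne N))
  have hχ : (1 : DirichletCharacter ℂ N) q = 1 :=
    MulChar.one_apply ((ZMod.isUnit_prime_iff_not_dvd q.2.1).mpr hqN)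
  change _ = (1 - (1 : DirichletCharacter ℂ N) q * (q : ℂ) ^ (-s))⁻¹
  rw [hχ, one_mul]

lemma tendsto_sub_two_mul_LFunctionTrivChar_sub_one :
    Tendsto (fun s ↦ (s - 2) * LFunctionTrivChar N (s - 1)) (𝓝[≠] 2)
      (𝓝 (∏ p ∈ N.primeFactors, (1 - (p : ℂ)⁻¹))) := by
  have hshift : Tendsto (fun s : ℂ ↦ s - 1) (𝓝[≠] 2) (𝓝[≠] 1) := by
    refine tendsto_nhdsWithin_iff.mpr ⟨?_, ?_⟩
    · exact (Continuous.tendsto' (by fun_prop) _ _ (by norm_num)).mono_left nhdsWithin_le_nhds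
    · filter_upwards [self_mem_nhdsWithin] with s hs h
      exact hs (by rw [Set.mem_singleton_iff] at h ⊢; linear_combination h)
  refine (LFunctionTrivChar_residue_one.comp hshift).congr fun s ↦ ?_
  rw [Function.comp_apply]
  ring

lemma tendsto_LFunctionTrivChar_two_mul_sub_one :
    Tendsto (fun s ↦ LFunctionTrivChar N (2 * s - 1)) (𝓝 2) (𝓝 (LFunctionTrivChar N 3)) := by
  have hlin : Tendsto (fun s : ℂ ↦ 2 * s - 1) (𝓝 2) (𝓝 3) :=
    Continuous.tendsto' (by fun_prop) _ _ (by norm_num)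
  exact (differentiableAt_LFunction 1 3 (.inl (by norm_num))).continuousAt.tendsto.comp hlin

lemma LFunctionTrivChar_three :
    LFunctionTrivChar N 3 = (∏ p ∈ N.primeFactors, (1 - ((p : ℂ) ^ 3)⁻¹)) * riemannZeta 3 := by
  rw [LFunctionTrivChar_eq_mul_riemannZeta (by norm_num)]
  congr! 3 with p
  rw [Complex.cpow_neg]
  norm_cast

end TrivialCharacter

/-- The Euler polynomial `1 - c p^{-s} + p^{1-2s}` of a weight-two `L`-function at a good prime `p`
with Frobenius trace `c`, as a function of `s`. -/
noncomputable def eulerPolynomial (c : ℂ) (p : ℕ) (s : ℂ) : ℂ :=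
  1 - c * (p : ℂ) ^ (-s) + (p : ℂ) ^ (1 - 2 * s)

lemma eulerPolynomial_two (c : ℂ) (p : ℕ) :
    eulerPolynomial c p 2 = 1 - c * ((p : ℂ) ^ 2)⁻¹ + ((p : ℂ) ^ 3)⁻¹ := by
  rw [eulerPolynomial, show (1 - 2 * 2 : ℂ) = -3 by norm_num, Complex.cpow_neg, Complex.cpow_neg]
  norm_cast

lemma continuous_eulerPolynomial (c : ℂ) {p : ℕ} (hp : p ≠ 0) :
    Continuous (eulerPolynomial c p) := by
  have : NeZero p := ⟨hp⟩
  unfold eulerPolynomial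
  fun_prop

lemma norm_eulerPolynomial_sub_one_le (c : ℂ) {p : ℕ} (hp : 0 < p) {s₀ s : ℂ}
    (hs : s₀.re ≤ s.re) :
    ‖eulerPolynomial c p s - 1‖ ≤ ‖c * (p : ℂ) ^ (-s₀)‖ + ‖(p : ℂ) ^ (1 - 2 * s₀)‖ :=
  calc ‖eulerPolynomial c p s - 1‖
      = ‖(p : ℂ) ^ (1 - 2 * s) - c * (p : ℂ) ^ (-s)‖ := by rw [eulerPolynomial]; ring_nf
    _ ≤ ‖c * (p : ℂ) ^ (-s)‖ + ‖(p : ℂ) ^ (1 - 2 * s)‖ := (norm_sub_le _ _).trans_eq (add_comm _ _)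
    _ ≤ ‖c * (p : ℂ) ^ (-s₀)‖ + ‖(p : ℂ) ^ (1 - 2 * s₀)‖ := by
      rw [norm_mul, norm_mul]
      gcongr ‖c‖ * ?_ + ?_ <;>
        refine Complex.norm_natCast_cpow_le_norm_natCast_cpow_of_pos hp ?_
      · simpa using hs
      · have hre (w : ℂ) : (1 - 2 * w).re = 1 - 2 * w.re := by simp
        linarith [hre s, hre s₀]

section EulerProduct

variable {S : Finset ℕ} {a : ℕ → ℂ} {s₀ s : ℂ}

lemma summable_norm_cpow_one_sub_two_mul (hs₀ : 1 < s₀.re) :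
    Summable fun q : PrimesOutside S ↦ ‖(q : ℂ) ^ (1 - 2 * s₀)‖ := by
  have hre : (1 - 2 * s₀).re = 1 - 2 * s₀.re := by simp
  have hsum : Summable fun n : ℕ ↦ (n : ℝ) ^ (1 - 2 * s₀).re :=
    Real.summable_nat_rpow.mpr (by linarith)
  refine (hsum.subtype {q | q.Prime ∧ q ∉ S}).congr fun q ↦ ?_
  exact (Complex.norm_natCast_cpow_of_pos q.2.1.pos _).symm

lemma summable_norm_eulerPolynomial_sub_one (hs₀ : 1 < s₀.re)
    (ha : Summable fun q : PrimesOutside S ↦ ‖a q * (q : ℂ) ^ (-s₀)‖) (hs : s₀.re ≤ s.re) :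
    Summable fun q : PrimesOutside S ↦ ‖eulerPolynomial (a q) q s - 1‖ :=
  (ha.add (summable_norm_cpow_one_sub_two_mul hs₀)).of_nonneg_of_le (fun _ ↦ norm_nonneg _)
    fun q ↦ norm_eulerPolynomial_sub_one_le (a q) q.2.1.pos hs

lemma multipliable_eulerPolynomial (hs₀ : 1 < s₀.re)
    (ha : Summable fun q : PrimesOutside S ↦ ‖a q * (q : ℂ) ^ (-s₀)‖) (hs : s₀.re ≤ s.re) :
    Multipliable fun q : PrimesOutside S ↦ eulerPolynomial (a q) q s := by
  simpa only [add_sub_cancel] using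
    multipliable_one_add_of_summable (summable_norm_eulerPolynomial_sub_one hs₀ ha hs)

lemma tprod_eulerPolynomial_ne_zero (hs₀ : 1 < s₀.re)
    (ha : Summable fun q : PrimesOutside S ↦ ‖a q * (q : ℂ) ^ (-s₀)‖) (hs : s₀.re ≤ s.re)
    (hne : ∀ q : PrimesOutside S, eulerPolynomial (a q) q s ≠ 0) :
    ∏' q : PrimesOutside S, eulerPolynomial (a q) q s ≠ 0 := by
  simpa only [add_sub_cancel] using tprod_one_add_ne_zero_of_summable
    (by simpa only [add_sub_cancel] using hne) (summable_norm_eulerPolynomial_sub_one hs₀ ha hs)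

lemma continuousWithinAt_tprod_eulerPolynomial (hs₀ : 1 < s₀.re)
    (ha : Summable fun q : PrimesOutside S ↦ ‖a q * (q : ℂ) ^ (-s₀)‖) :
    ContinuousWithinAt (fun s ↦ ∏' q : PrimesOutside S, eulerPolynomial (a q) q s)
      {s | s₀.re ≤ s.re} s := by
  have hlim := tendsto_tprod_one_add_of_dominated_convergence
    (f := fun s (q : PrimesOutside S) ↦ eulerPolynomial (a q) q s - 1)
    (𝓕 := 𝓝[{s | s₀.re ≤ s.re}] s)
    (ha.add (summable_norm_cpow_one_sub_two_mul hs₀))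
    (fun q ↦
      (continuous_eulerPolynomial (a q) q.2.1.ne_zero).continuousWithinAt.tendsto.sub_const 1)
    (eventually_mem_nhdsWithin.mono fun s hs q ↦
      norm_eulerPolynomial_sub_one_le (a q) q.2.1.pos hs)
  simpa only [ContinuousWithinAt, add_sub_cancel] using hlim

end EulerProduct

/-- The global generating function `B(s)`, with Frobenius traces `a` and bad primes `S`. -/
noncomputable def globalGenFun (S : Finset ℕ) (a : ℕ → ℂ) (s : ℂ) : ℂ :=
  ∏' q : PrimesOutside S, (1 - (q : ℂ) ^ (1 - 2 * s)) /
    (eulerPolynomial (a q) q s * (1 - (q : ℂ) ^ (1 - s)))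

lemma globalGenFun_eq (N : ℕ) [NeZero N] {a : ℕ → ℂ} {s : ℂ} (hs : 2 < s.re)
    (hmul : Multipliable fun q : PrimesOutside N.primeFactors ↦ eulerPolynomial (a q) q s)
    (hne : ∏' q : PrimesOutside N.primeFactors, eulerPolynomial (a q) q s ≠ 0) :
    globalGenFun N.primeFactors a s =
      LFunctionTrivChar N (s - 1) / (LFunctionTrivChar N (2 * s - 1) *
        ∏' q : PrimesOutside N.primeFactors, eulerPolynomial (a q) q s) := by
  have hs₁ : 1 < (s - 1).re := by
    rw [Complex.sub_re, Complex.one_re]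
    linarith
  have hs₃ : 1 < (2 * s - 1).re := by
    have hre : (2 * s - 1).re = 2 * s.re - 1 := by simp
    linarith
  have hne₃ : LFunctionTrivChar N (2 * s - 1) ≠ 0 :=
    LFunction_ne_zero_of_one_le_re _ (.inr fun h ↦ by simp [h] at hs₃) hs₃.le
  have hprod := (hasProd_LFunctionTrivChar N hs₁).div₀
    ((hasProd_LFunctionTrivChar N hs₃).mul hmul.hasProd) (mul_ne_zero hne₃ hne)
  refine (tprod_congr fun q ↦ ?_).trans hprod.tprod_eq
  rw [neg_sub, neg_sub]
  simp only [div_eq_mul_inv, mul_inv, inv_inv]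
  ring

lemma tendsto_sub_two_mul_globalGenFun (N : ℕ) [NeZero N] {a : ℕ → ℂ}
    (ha : Summable fun q : PrimesOutside N.primeFactors ↦ ‖a q * (q : ℂ) ^ (-2 : ℂ)‖)
    (hne : ∏' q : PrimesOutside N.primeFactors, eulerPolynomial (a q) q 2 ≠ 0) :
    Tendsto (fun s ↦ (s - 2) * globalGenFun N.primeFactors a s) (𝓝[{s | 2 < s.re}] 2)
      (𝓝 ((∏ p ∈ N.primeFactors, (1 - (p : ℂ)⁻¹)) / (LFunctionTrivChar N 3 *
        ∏' q : PrimesOutside N.primeFactors, eulerPolynomial (a q) q 2))) := by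
  have htwo : 1 < (2 : ℂ).re := by norm_num
  have hprod : Tendsto (fun s ↦ ∏' q : PrimesOutside N.primeFactors, eulerPolynomial (a q) q s)
      (𝓝[{s | 2 < s.re}] 2) (𝓝 (∏' q : PrimesOutside N.primeFactors, eulerPolynomial (a q) q 2)) :=
    (continuousWithinAt_tprod_eulerPolynomial htwo ha).mono_left
      (nhdsWithin_mono _ fun s (hs : 2 < s.re) ↦ by simpa using hs.le)
  have hsub : {s : ℂ | 2 < s.re} ⊆ {2}ᶜ := by
    rintro s hs rfl
    simp at hs
  have hres := (tendsto_sub_two_mul_LFunctionTrivChar_sub_one N).mono_left (nhdsWithin_mono 2 hsub)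
  have hthree := (tendsto_LFunctionTrivChar_two_mul_sub_one N).mono_left
    (nhdsWithin_le_nhds (s := {s | 2 < s.re}))
  have hne_three : LFunctionTrivChar N 3 ≠ 0 :=
    LFunction_ne_zero_of_one_le_re 1 (.inr (by norm_num)) (by norm_num)
  refine (hres.div (hthree.mul hprod) (mul_ne_zero hne_three hne)).congr' ?_
  filter_upwards [self_mem_nhdsWithin, hprod.eventually_ne hne] with s (hs : 2 < s.re) hne_s
  rw [globalGenFun_eq N hs (multipliable_eulerPolynomial htwo ha (by simpa using hs.le)) hne_s]
  exact mul_div_assoc _ _ _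

theorem stmt_16_general (S : Finset ℕ) (hS : ∀ p ∈ S, p.Prime) (a : ℕ → ℂ)
    (ha : Summable fun q : PrimesOutside S ↦ ‖a q‖ / (q : ℝ) ^ 2)
    (hne : ∀ q : PrimesOutside S, eulerPolynomial (a q) q 2 ≠ 0) :
    Multipliable (fun q : PrimesOutside S ↦ (eulerPolynomial (a q) q 2)⁻¹) ∧
    Tendsto (fun s ↦ (s - 2) * globalGenFun S a s) (𝓝[{s | 2 < s.re}] 2)
      (𝓝 ((∏ p ∈ S, (1 - (p : ℂ)⁻¹)) * (∏ p ∈ S, (1 - ((p : ℂ) ^ 3)⁻¹)⁻¹) *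
        (∏' q : PrimesOutside S, (eulerPolynomial (a q) q 2)⁻¹) / riemannZeta 3)) := by
  obtain ⟨N, hN, rfl⟩ : ∃ N : ℕ, NeZero N ∧ N.primeFactors = S :=
    ⟨∏ p ∈ S, p, ⟨Finset.prod_ne_zero_iff.mpr fun p hp ↦ (hS p hp).ne_zero⟩,
      Nat.primeFactors_prod hS⟩
  have htwo : 1 < (2 : ℂ).re := by norm_num
  have ha_two : Summable fun q : PrimesOutside N.primeFactors ↦ ‖a q * (q : ℂ) ^ (-2 : ℂ)‖ := by
    simpa [div_eq_mul_inv, Complex.cpow_neg] using ha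
  have hmul := multipliable_eulerPolynomial htwo ha_two le_rfl
  have hprod_ne := tprod_eulerPolynomial_ne_zero htwo ha_two le_rfl hne
  refine ⟨hmul.inv₀ hprod_ne, ?_⟩
  convert tendsto_sub_two_mul_globalGenFun N ha_two hprod_ne using 2
  rw [LFunctionTrivChar_three, hmul.tprod_inv₀ hprod_ne, Finset.prod_inv_distrib]
  simp only [div_eq_mul_inv, mul_inv]
  ring

lemma norm_intCast_div_sq_le {c : ℤ} {p : ℕ} (hc : c ^ 2 ≤ 4 * p) :
    ‖(c : ℂ)‖ / (p : ℝ) ^ 2 ≤ 2 * (p : ℝ) ^ (-(3 / 2) : ℝ) := by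
  rcases p.eq_zero_or_pos with rfl | hp
  · simp
  have hp' : (0 : ℝ) < p := by exact_mod_cast hp
  have hcabs : |(c : ℝ)| ≤ 2 * (p : ℝ) ^ (1 / 2 : ℝ) := by
    rw [← Real.sqrt_eq_rpow]
    have hcr : (c : ℝ) ^ 2 ≤ 4 * p := by exact_mod_cast hc
    refine abs_le_of_sq_le_sq ?_ (by positivity)
    rw [mul_pow, Real.sq_sqrt hp'.le]
    linarith
  rw [Complex.norm_intCast, div_eq_mul_inv, ← Real.rpow_natCast, ← Real.rpow_neg hp'.le]
  calc |(c : ℝ)| * (p : ℝ) ^ (-(2 : ℕ) : ℝ)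
      ≤ 2 * (p : ℝ) ^ (1 / 2 : ℝ) * (p : ℝ) ^ (-(2 : ℕ) : ℝ) := by gcongr
    _ = 2 * (p : ℝ) ^ (-(3 / 2) : ℝ) := by
      rw [mul_assoc, ← Real.rpow_add hp']
      norm_num

lemma summable_norm_intCast_div_sq {S : Finset ℕ} {a : ℕ → ℤ}
    (ha : ∀ p : ℕ, p.Prime → p ∉ S → a p ^ 2 ≤ 4 * p) :
    Summable fun q : PrimesOutside S ↦ ‖(a q : ℂ)‖ / (q : ℝ) ^ 2 := by
  have hsum : Summable fun q : PrimesOutside S ↦ 2 * (q : ℝ) ^ (-(3 / 2) : ℝ) :=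
    ((Real.summable_nat_rpow.mpr (by norm_num)).subtype {q | q.Prime ∧ q ∉ S}).mul_left 2
  exact hsum.of_nonneg_of_le (fun q ↦ by positivity)
    fun q ↦ norm_intCast_div_sq_le (ha q q.2.1 q.2.2)

lemma eulerPolynomial_intCast_two_ne_zero (c : ℤ) {p : ℕ} (hp : p.Prime) :
    eulerPolynomial c p 2 ≠ 0 := by
  intro h
  have hp₀ : (p : ℂ) ≠ 0 := by exact_mod_cast hp.ne_zero
  rw [eulerPolynomial_two] at h
  have hroot : (1 : ℂ) = p * (c - p ^ 2) := by
    field_simp at h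
    linear_combination h
  have hdvd : (p : ℤ) ∣ 1 := ⟨c - p ^ 2, by exact_mod_cast hroot⟩
  exact hp.one_lt.ne' (by exact_mod_cast Int.eq_one_of_dvd_one (Int.natCast_nonneg p) hdvd)

/-- `B(s)` has a simple pole at `s = 2` with the stated residue. -/
theorem stmt_16 (S : Finset ℕ) (hS : ∀ p ∈ S, p.Prime) (a : ℕ → ℤ)
    (ha : ∀ p : ℕ, p.Prime → p ∉ S → (a p) ^ 2 ≤ 4 * p)
    (B : ℂ → ℂ)
    (hB : ∀ s : ℂ, B s = ∏' q : {q : ℕ // q.Prime ∧ q ∉ S},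
      (1 - (q.1 : ℂ) ^ (1 - 2 * s)) /
        ((1 - (a q.1 : ℂ) * (q.1 : ℂ) ^ (-s) + (q.1 : ℂ) ^ (1 - 2 * s)) *
          (1 - (q.1 : ℂ) ^ (1 - s)))) :
    Multipliable (fun q : {q : ℕ // q.Prime ∧ q ∉ S} =>
      (1 - (a q.1 : ℂ) * ((q.1 : ℂ) ^ 2)⁻¹ + ((q.1 : ℂ) ^ 3)⁻¹)⁻¹) ∧
    Tendsto (fun s : ℂ => (s - 2) * B s) (nhdsWithin 2 {s : ℂ | 2 < s.re})
      (nhds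
        ((∏ p ∈ S, (1 - ((p : ℂ))⁻¹)) *
          (∏ p ∈ S, (1 - ((p : ℂ) ^ 3)⁻¹)⁻¹) *
          (∏' q : {q : ℕ // q.Prime ∧ q ∉ S},
            (1 - (a q.1 : ℂ) * ((q.1 : ℂ) ^ 2)⁻¹ + ((q.1 : ℂ) ^ 3)⁻¹)⁻¹) /
          riemannZeta 3)) := by
  obtain rfl : B = globalGenFun S (fun p ↦ a p) := funext hB
  simpa only [eulerPolynomial_two] using stmt_16_general S hS (fun p ↦ a p)
    (summable_norm_intCast_div_sq ha) fun q ↦ eulerPolynomial_intCast_two_ne_zero (a q) q.2.1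
end
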